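/- In the polynomial ring ℤ[c₀, c₁, c₂, a₀, a₁, a₂], the polynomial B₁₃ divides the polynomial q₀·(U·det M − q·B₂₃), where U = a₂², q₀ = a₂c₂ − a₁ and q = a₂³c₁c₂ − a₁a₂²c₂² − a₂³c₀ − a₁a₂²c₁ + 2a₁²a₂c₂ − a₁³. -/

import Mathlib

/-- The matrix of multiplication by `α = a₀ + a₁r + a₂r²` on `ℚ(r)` in the basis `(1, r, r²)`,
where `r³ + c₂r² + c₁r + c₀ = 0`. -/
def Mmat {R : Type*} [CommRing R] (c₀ c₁ c₂ a₀ a₁ a₂ : R) : Matrix (Fin 3) (Fin 3) R :=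
  !![a₀, -c₀ * a₂, a₂ * c₀ * c₂ - a₁ * c₀;
     a₁, a₀ - c₁ * a₂, a₂ * c₁ * c₂ - a₂ * c₀ - a₁ * c₁;
     a₂, a₁ - c₂ * a₂, a₂ * c₂ ^ 2 - a₂ * c₁ - a₁ * c₂ + a₀]

/-- The `(i+1, j+1)` cofactor of a 3×3 matrix: `(−1)^{i+j}` times the determinant of the 2×2
matrix obtained by deleting row `i` and column `j` (indices here are 0-based, so `cof M i j`
is the cofactor `B_{(i+1)(j+1)}` in 1-based notation). -/
def cof {R : Type*} [CommRing R] (M : Matrix (Fin 3) (Fin 3) R) (i j : Fin 3) : R :=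
  (-1 : R) ^ ((i : ℕ) + (j : ℕ)) * (M.submatrix i.succAbove j.succAbove).det

/-!
The double adjugate of a 3×3 matrix is `det M • M`, and its `(3, 1)` entry reads
`a₂ · det M = B₁₂ B₂₃ - B₁₃ B₂₂`. Since `q = a₂ B₁₂ - a₁ B₁₃`, it follows that
`U · det M - q B₂₃ = B₁₃ (a₁ B₂₃ - a₂ B₂₂)`.
-/

section Cofactor

variable {R : Type*} [CommRing R] (M : Matrix (Fin 3) (Fin 3) R) (i j : Fin 3)

theorem cof_eq_adjugate : cof M i j = M.adjugate j i :=
  (M.adjugate_fin_succ_eq_det_submatrix j i).symm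

-- With cyclic indices the sign `(-1) ^ (i + j)` is absorbed by the order of rows and columns.
theorem cof_eq_cyclic_minor :
    cof M i j =
      M (i + 1) (j + 1) * M (i + 2) (j + 2) - M (i + 1) (j + 2) * M (i + 2) (j + 1) := by
  rw [cof_eq_adjugate, Matrix.adjugate_fin_three]
  fin_cases i <;> fin_cases j <;>
    simp only [Fin.zero_eta, Fin.mk_one, Fin.reduceFinMk, Fin.reduceAdd, zero_add,
      Matrix.of_apply, Matrix.cons_val] <;>
    ring

theorem det_mul_apply_eq_cof_mul_cof_sub :
    M.det * M i j =
      cof M (i + 1) (j + 1) * cof M (i + 2) (j + 2) -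
        cof M (i + 1) (j + 2) * cof M (i + 2) (j + 1) := by
  calc M.det * M i j
      = M.adjugate.adjugate i j := by simp [Matrix.adjugate_adjugate]
    _ = cof M.adjugate j i := (cof_eq_adjugate _ _ _).symm
    _ = cof M (i + 1) (j + 1) * cof M (i + 2) (j + 2) -
          cof M (i + 1) (j + 2) * cof M (i + 2) (j + 1) := by
      simp only [cof_eq_cyclic_minor M.adjugate, ← cof_eq_adjugate]
      ring

end Cofactor

section Mmat

variable {R : Type*} [CommRing R] (c₀ c₁ c₂ a₀ a₁ a₂ : R)

theorem det_Mmat_mul_eq_cof_mul_cof_sub :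
    (Mmat c₀ c₁ c₂ a₀ a₁ a₂).det * a₂ =
      cof (Mmat c₀ c₁ c₂ a₀ a₁ a₂) 0 1 * cof (Mmat c₀ c₁ c₂ a₀ a₁ a₂) 1 2 -
        cof (Mmat c₀ c₁ c₂ a₀ a₁ a₂) 0 2 * cof (Mmat c₀ c₁ c₂ a₀ a₁ a₂) 1 1 :=
  det_mul_apply_eq_cof_mul_cof_sub (Mmat c₀ c₁ c₂ a₀ a₁ a₂) 2 0

theorem mul_cof_Mmat_sub_mul_cof_Mmat :
    a₂ * cof (Mmat c₀ c₁ c₂ a₀ a₁ a₂) 0 1 - a₁ * cof (Mmat c₀ c₁ c₂ a₀ a₁ a₂) 0 2 =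
      a₂ ^ 3 * c₁ * c₂ - a₁ * a₂ ^ 2 * c₂ ^ 2 - a₂ ^ 3 * c₀ - a₁ * a₂ ^ 2 * c₁ +
        2 * a₁ ^ 2 * a₂ * c₂ - a₁ ^ 3 := by
  simp only [cof_eq_cyclic_minor, Mmat, zero_add, Fin.reduceAdd, Matrix.of_apply, Matrix.cons_val]
  ring

theorem stmt_15_general :
    cof (Mmat c₀ c₁ c₂ a₀ a₁ a₂) 0 2 ∣
      a₂ ^ 2 * (Mmat c₀ c₁ c₂ a₀ a₁ a₂).det -
        (a₂ ^ 3 * c₁ * c₂ - a₁ * a₂ ^ 2 * c₂ ^ 2 - a₂ ^ 3 * c₀ - a₁ * a₂ ^ 2 * c₁ +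
            2 * a₁ ^ 2 * a₂ * c₂ - a₁ ^ 3) * cof (Mmat c₀ c₁ c₂ a₀ a₁ a₂) 1 2 := by
  rw [← mul_cof_Mmat_sub_mul_cof_Mmat c₀ c₁ c₂ a₀ a₁ a₂]
  use a₁ * cof (Mmat c₀ c₁ c₂ a₀ a₁ a₂) 1 2 - a₂ * cof (Mmat c₀ c₁ c₂ a₀ a₁ a₂) 1 1
  linear_combination a₂ * det_Mmat_mul_eq_cof_mul_cof_sub c₀ c₁ c₂ a₀ a₁ a₂

end Mmat

open MvPolynomial in
/-- In the polynomial ring `ℤ[c₀, c₁, c₂, a₀, a₁, a₂]` (here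
`MvPolynomial (Fin 6) ℤ` with the variables `X 0, …, X 5` standing for
`c₀, c₁, c₂, a₀, a₁, a₂`), the polynomial `B₁₃` divides `q₀·(U·det M − q·B₂₃)`, where
`U = a₂²`, `q₀ = a₂c₂ − a₁` and
`q = a₂³c₁c₂ − a₁a₂²c₂² − a₂³c₀ − a₁a₂²c₁ + 2a₁²a₂c₂ − a₁³`. -/
theorem stmt_15 :
    letI c₀ : MvPolynomial (Fin 6) ℤ := X 0
    letI c₁ : MvPolynomial (Fin 6) ℤ := X 1
    letI c₂ : MvPolynomial (Fin 6) ℤ := X 2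
    letI a₀ : MvPolynomial (Fin 6) ℤ := X 3
    letI a₁ : MvPolynomial (Fin 6) ℤ := X 4
    letI a₂ : MvPolynomial (Fin 6) ℤ := X 5
    cof (Mmat c₀ c₁ c₂ a₀ a₁ a₂) 0 2 ∣
      (a₂ * c₂ - a₁) *
        (a₂ ^ 2 * (Mmat c₀ c₁ c₂ a₀ a₁ a₂).det -
          (a₂ ^ 3 * c₁ * c₂ - a₁ * a₂ ^ 2 * c₂ ^ 2 - a₂ ^ 3 * c₀ - a₁ * a₂ ^ 2 * c₁ +
              2 * a₁ ^ 2 * a₂ * c₂ - a₁ ^ 3) * cof (Mmat c₀ c₁ c₂ a₀ a₁ a₂) 1 2) :=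
  (stmt_15_general _ _ _ _ _ _).mul_left _
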